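/- Let Ω be a finite scenario set with probability weights p : Ω → ℝ satisfying p_ω ≥ 0 and Σ_ω p_ω = 1, let L : Ω → ℝ, and let α ∈ (0,1). Define the value-at-risk VaR_α(L) = inf { l ∈ ℝ : Σ_{ω : L_ω ≤ l} p_ω ≥ α }. Then VaR_α(L) is a minimizer of the Rockafellar–Uryasev function, i.e. F_α(VaR_α(L)) = inf_{θ ∈ ℝ} F_α(θ) = CVaR_α(L). -/

import Mathlib

/-!
The map `θ ↦ max (x - θ) 0` is convex, and at `θ = v` both `-𝟙[v < x]` and `-𝟙[v ≤ x]` are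
subgradients. Taking expectations, the expected excess has at `v` the subgradients `-μ (v, ∞)`
and `-μ [v, ∞)`, hence everything in between. The value-at-risk is the lower `α`-quantile `v`, for
which `μ (v, ∞) ≤ 1 - α ≤ μ [v, ∞)`; so `0` is a subgradient of the Rockafellar–Uryasev function
at `v`. Finitely many weighted scenarios are the case of a finite sum of point masses.
-/

open MeasureTheory ProbabilityTheory Set Filter Topology

section ExpectedExcess

/-- The expected excess (stop-loss premium) `𝔼[(X - θ)⁺]` over the level `θ` of a loss `X` with
law `μ`; the junk value `0` if that expectation is infinite. -/
noncomputable def expectedExcess (μ : Measure ℝ) (θ : ℝ) : ℝ :=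
  ∫ x, max (x - θ) 0 ∂μ

theorem max_sub_zero_add_indicator_mul_le {s : Set ℝ} {v : ℝ} (hvs : Ioi v ⊆ s) (hsv : s ⊆ Ici v)
    (θ x : ℝ) : max (x - v) 0 + s.indicator 1 x * (v - θ) ≤ max (x - θ) 0 := by
  by_cases hx : x ∈ s
  · have hvx : v ≤ x := hsv hx
    simp [hx, hvx]
  · have hxv : x ≤ v := not_lt.1 fun h => hx (hvs h)
    simp [hx, hxv]

variable {μ : Measure ℝ} [IsFiniteMeasure μ]

theorem integrable_max_sub_zero (hμ : Integrable (fun x : ℝ => max x 0) μ) (θ : ℝ) :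
    Integrable (fun x : ℝ => max (x - θ) 0) μ := by
  have hbound (x : ℝ) : max (x - θ) 0 ≤ max x 0 + |θ| := by
    refine max_le ?_ (by positivity)
    linarith [le_max_left x 0, neg_le_abs θ]
  refine (hμ.add (integrable_const |θ|)).mono' (by fun_prop) (ae_of_all _ fun x => ?_)
  exact (Real.norm_of_nonneg (le_max_right _ _)).trans_le (hbound x)

theorem expectedExcess_add_measureReal_mul_le (hμ : Integrable (fun x : ℝ => max x 0) μ)
    {s : Set ℝ} {v : ℝ} (hs : MeasurableSet s) (hvs : Ioi v ⊆ s) (hsv : s ⊆ Ici v) (θ : ℝ) :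
    expectedExcess μ v + μ.real s * (v - θ) ≤ expectedExcess μ θ := by
  have hint_v := integrable_max_sub_zero hμ v
  have hint_s : Integrable (fun x => s.indicator (1 : ℝ → ℝ) x * (v - θ)) μ :=
    ((integrable_const 1).indicator hs).mul_const _
  calc expectedExcess μ v + μ.real s * (v - θ)
      = ∫ x, (max (x - v) 0 + s.indicator 1 x * (v - θ)) ∂μ := by
        rw [integral_add hint_v hint_s, integral_mul_const, integral_indicator_one hs,
          expectedExcess]
    _ ≤ expectedExcess μ θ :=
        integral_mono (hint_v.add hint_s) (integrable_max_sub_zero hμ θ)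
          (max_sub_zero_add_indicator_mul_le hvs hsv θ)

theorem expectedExcess_add_mul_le (hμ : Integrable (fun x : ℝ => max x 0) μ) {v c : ℝ}
    (hIoi : μ.real (Ioi v) ≤ c) (hIci : c ≤ μ.real (Ici v)) (θ : ℝ) :
    expectedExcess μ v + c * (v - θ) ≤ expectedExcess μ θ := by
  rcases le_total v θ with hvθ | hθv
  · calc expectedExcess μ v + c * (v - θ)
        ≤ expectedExcess μ v + μ.real (Ioi v) * (v - θ) :=
          add_le_add_right (mul_le_mul_of_nonpos_right hIoi (sub_nonpos.2 hvθ)) _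
      _ ≤ expectedExcess μ θ :=
          expectedExcess_add_measureReal_mul_le hμ measurableSet_Ioi Subset.rfl
            Ioi_subset_Ici_self θ
  · calc expectedExcess μ v + c * (v - θ)
        ≤ expectedExcess μ v + μ.real (Ici v) * (v - θ) := by
          gcongr
      _ ≤ expectedExcess μ θ :=
          expectedExcess_add_measureReal_mul_le hμ measurableSet_Ici Ioi_subset_Ici_self
            Subset.rfl θ

/-- The Rockafellar–Uryasev function `F_α(θ) = θ + (1 - α)⁻¹ 𝔼[(X - θ)⁺]` of a loss `X` with
law `μ`; its infimum over `θ` is the conditional value-at-risk. -/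
noncomputable def rockafellarUryasev (μ : Measure ℝ) (α θ : ℝ) : ℝ :=
  θ + (1 - α)⁻¹ * expectedExcess μ θ

theorem rockafellarUryasev_quantile_le (hμ : Integrable (fun x : ℝ => max x 0) μ) {α v : ℝ}
    (hα : α < 1) (hIoi : μ.real (Ioi v) ≤ 1 - α) (hIci : 1 - α ≤ μ.real (Ici v)) (θ : ℝ) :
    rockafellarUryasev μ α v ≤ rockafellarUryasev μ α θ := by
  have hα' : 0 < 1 - α := sub_pos.2 hα
  calc rockafellarUryasev μ α v
      = θ + (1 - α)⁻¹ * (expectedExcess μ v + (1 - α) * (v - θ)) := by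
        rw [rockafellarUryasev]
        field_simp
        ring
    _ ≤ rockafellarUryasev μ α θ := by
        rw [rockafellarUryasev]
        gcongr
        exact expectedExcess_add_mul_le hμ hIoi hIci θ

end ExpectedExcess

section ValueAtRisk

/-- The value-at-risk of a loss with law `μ`, i.e. the lower `α`-quantile of `μ`. It is a genuine
infimum for `0 < α < 1`, and the junk value `0` where the set is empty or unbounded below. -/
noncomputable def valueAtRisk (μ : Measure ℝ) (α : ℝ) : ℝ :=
  sInf {l | α ≤ cdf μ l}

variable {μ : Measure ℝ} {α : ℝ}

theorem bddBelow_setOf_le_cdf (hα : 0 < α) : BddBelow {l | α ≤ cdf μ l} := by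
  obtain ⟨b, hb⟩ := ((tendsto_cdf_atBot μ).eventually_lt_const hα).exists
  exact ⟨b, fun l hl => ((monotone_cdf μ).reflect_lt (hb.trans_le hl)).le⟩

theorem nonempty_setOf_le_cdf (hα : α < 1) : {l | α ≤ cdf μ l}.Nonempty :=
  ((tendsto_cdf_atTop μ).eventually_const_le hα).exists

theorem cdf_lt_of_lt_valueAtRisk (hα : 0 < α) {l : ℝ} (hl : l < valueAtRisk μ α) :
    cdf μ l < α :=
  not_le.1 fun h => hl.not_ge (csInf_le (bddBelow_setOf_le_cdf hα) h)

theorem le_cdf_valueAtRisk (hα : α < 1) : α ≤ cdf μ (valueAtRisk μ α) := by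
  have hright : Tendsto (cdf μ) (𝓝[>] valueAtRisk μ α) (𝓝 (cdf μ (valueAtRisk μ α))) :=
    ((cdf μ).right_continuous _).mono Ioi_subset_Ici_self
  refine ge_of_tendsto hright (eventually_mem_nhdsWithin.mono fun l hl => ?_)
  obtain ⟨m, hm, hml⟩ := exists_lt_of_csInf_lt (nonempty_setOf_le_cdf hα) hl
  exact hm.trans (monotone_cdf μ hml.le)

variable [IsProbabilityMeasure μ]

theorem measureReal_Ioi_valueAtRisk_le (hα : α < 1) :
    μ.real (Ioi (valueAtRisk μ α)) ≤ 1 - α := by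
  rw [← compl_Iic, probReal_compl_eq_one_sub measurableSet_Iic, ← cdf_eq_real]
  exact sub_le_sub_left (le_cdf_valueAtRisk hα) 1

theorem measureReal_Iio_eq_leftLim_cdf (x : ℝ) :
    μ.real (Iio x) = Function.leftLim (cdf μ) x := by
  have hnonneg : 0 ≤ Function.leftLim (cdf μ) x :=
    (cdf_nonneg μ (x - 1)).trans ((monotone_cdf μ).le_leftLim (sub_one_lt x))
  have hmeasure : μ (Iio x) = ENNReal.ofReal (Function.leftLim (cdf μ) x) := by
    simpa only [measure_cdf, sub_zero] using (cdf μ).measure_Iio (tendsto_cdf_atBot μ) x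
  rw [measureReal_def, hmeasure, ENNReal.toReal_ofReal hnonneg]

theorem le_measureReal_Ici_valueAtRisk (hα : 0 < α) :
    1 - α ≤ μ.real (Ici (valueAtRisk μ α)) := by
  rw [← compl_Iio, probReal_compl_eq_one_sub measurableSet_Iio, measureReal_Iio_eq_leftLim_cdf]
  refine sub_le_sub_left (le_of_tendsto ((monotone_cdf μ).tendsto_leftLim _) ?_) 1
  exact eventually_mem_nhdsWithin.mono fun l hl => (cdf_lt_of_lt_valueAtRisk hα hl).le

theorem var_minimizes_rockafellar_uryasev_general
    (hμ : Integrable (fun x : ℝ => max x 0) μ) (hα : 0 < α ∧ α < 1) :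
    rockafellarUryasev μ α (valueAtRisk μ α) = sInf (range (rockafellarUryasev μ α)) := by
  have hleast : IsLeast (range (rockafellarUryasev μ α))
      (rockafellarUryasev μ α (valueAtRisk μ α)) :=
    ⟨mem_range_self _, forall_mem_range.2 <| rockafellarUryasev_quantile_le hμ hα.2
      (measureReal_Ioi_valueAtRisk_le hα.2) (le_measureReal_Ici_valueAtRisk hα.1)⟩
  exact hleast.csInf_eq.symm

end ValueAtRisk

section DiscreteLaw

variable {ι X : Type*} [Fintype ι] [MeasurableSpace X]

/-- The law of a variable taking the value `L i` with weight `p i`, as a sum of point masses;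
negative weights are truncated to `0`. -/
noncomputable def discreteLaw (p : ι → ℝ) (L : ι → X) : Measure X :=
  ∑ i, ENNReal.ofReal (p i) • Measure.dirac (L i)

variable {p : ι → ℝ} {L : ι → X}

theorem isProbabilityMeasure_discreteLaw (hp : ∀ i, 0 ≤ p i) (hpsum : ∑ i, p i = 1) :
    IsProbabilityMeasure (discreteLaw p L) where
  measure_univ := by
    simp [discreteLaw, ← ENNReal.ofReal_sum_of_nonneg fun i _ => hp i, hpsum]

theorem measureReal_discreteLaw (hp : ∀ i, 0 ≤ p i) {s : Set X} [DecidablePred (· ∈ s)]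
    (hs : MeasurableSet s) : (discreteLaw p L).real s = ∑ i with L i ∈ s, p i := by
  have hmeasure : discreteLaw p L s = ∑ i with L i ∈ s, ENNReal.ofReal (p i) := by
    simp [discreteLaw, hs, indicator_apply, Finset.sum_filter]
  rw [measureReal_def, hmeasure, ← ENNReal.ofReal_sum_of_nonneg fun i _ => hp i,
    ENNReal.toReal_ofReal (Finset.sum_nonneg fun i _ => hp i)]

variable [MeasurableSingletonClass X] {E : Type*} [NormedAddCommGroup E]

theorem integrable_discreteLaw (f : X → E) : Integrable f (discreteLaw p L) :=
  integrable_finsetSum_measure.2 fun _ _ =>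
    (integrable_dirac enorm_lt_top).smul_measure ENNReal.ofReal_ne_top

theorem integral_discreteLaw [NormedSpace ℝ E] [CompleteSpace E] (hp : ∀ i, 0 ≤ p i) (f : X → E) :
    ∫ x, f x ∂discreteLaw p L = ∑ i, p i • f (L i) := by
  rw [discreteLaw, integral_finsetSum_measure fun _ _ =>
    (integrable_dirac enorm_lt_top).smul_measure ENNReal.ofReal_ne_top]
  simp [integral_smul_measure, hp]

theorem valueAtRisk_discreteLaw {L : ι → ℝ} (hp : ∀ i, 0 ≤ p i) (hpsum : ∑ i, p i = 1) (α : ℝ) :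
    valueAtRisk (discreteLaw p L) α = sInf {l | α ≤ ∑ i with L i ≤ l, p i} := by
  have := isProbabilityMeasure_discreteLaw (L := L) hp hpsum
  simp only [valueAtRisk, cdf_eq_real, measureReal_discreteLaw hp measurableSet_Iic, mem_Iic]

theorem rockafellarUryasev_discreteLaw {L : ι → ℝ} (hp : ∀ i, 0 ≤ p i) (α : ℝ) :
    rockafellarUryasev (discreteLaw p L) α =
      fun θ => θ + (1 - α)⁻¹ * ∑ i, p i * max (L i - θ) 0 := by
  funext θ
  simp only [rockafellarUryasev, expectedExcess, integral_discreteLaw hp, smul_eq_mul]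

end DiscreteLaw

open Finset in
/-- `VaR_α(L) = inf { l : Σ_{ω : L_ω ≤ l} p_ω ≥ α }` is a minimizer of the
Rockafellar–Uryasev function: `F_α(VaR_α(L)) = inf_θ F_α(θ) = CVaR_α(L)`. -/
theorem var_minimizes_rockafellar_uryasev
    (N : ℕ) (p : Fin N → ℝ) (L : Fin N → ℝ) (α : ℝ)
    (hp : ∀ ω, 0 ≤ p ω) (hpsum : ∑ ω, p ω = 1)
    (hα : 0 < α ∧ α < 1) :
    (sInf {l : ℝ | α ≤ ∑ ω ∈ Finset.univ.filter (fun ω => L ω ≤ l), p ω}) +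
        (1 - α)⁻¹ *
          ∑ ω, p ω *
            max (L ω - sInf {l : ℝ | α ≤ ∑ ω ∈ Finset.univ.filter (fun ω => L ω ≤ l), p ω}) 0 =
      sInf (Set.range fun θ : ℝ => θ + (1 - α)⁻¹ * ∑ ω, p ω * max (L ω - θ) 0) := by
  have := isProbabilityMeasure_discreteLaw (L := L) hp hpsum
  simpa only [rockafellarUryasev_discreteLaw hp, valueAtRisk_discreteLaw hp hpsum] using
    var_minimizes_rockafellar_uryasev_general (integrable_discreteLaw (p := p) (L := L) _) hα
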